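/- arXiv:2008.10205 — 7 statements merged into one kernel-verified Lean document; each statement's English description precedes it below -/
import Mathlib

section
/- Let μ be a family of probability measures on the discrete groupoid 𝒢 and let x be a unit. Suppose μ satisfies the Reiter condition at x: for every g ∈ 𝒢^x, lim_{n→∞} ‖g·μ^{*n,s(g)} − μ^{*n,x}‖₁ = 0. Then the tail boundary of the Markov operator P_μ^x is trivial: every bounded harmonic sequence (u_n)_{n≥1} for P_μ^x consists of constant functions on 𝒢^x, and u_n = u_{n+1} for all n. -/
open CategoryTheory

/-- The fiber `𝒢^x`: elements of the groupoid with range (target) `x`,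
encoded as pairs `⟨z, g⟩` with `g : z ⟶ x`; the source of such an element is `z`. -/
abbrev GpdFiber (Ω : Type*) [Groupoid Ω] (x : Ω) := Σ z : Ω, z ⟶ x

/-- The convolution `f * μ` of a function `f` on `𝒢^x` with a family of measures `μ`:
`(f*μ)(a) = ∑_{h : s(h)=s(a)} f(a h⁻¹) · μ^{r(h)}(h)`.  Here the product `g h` of groupoid
elements (defined when `s(g) = r(h)`) corresponds to the composite `h ≫ g` of morphisms. -/
noncomputable def convF {Ω : Type*} [Groupoid Ω] {x : Ω} (f : GpdFiber Ω x → ℝ)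
    (μ : ∀ y : Ω, GpdFiber Ω y → ℝ) : GpdFiber Ω x → ℝ :=
  fun a => ∑' p : Σ w : Ω, (a.1 ⟶ w), f ⟨p.1, Groupoid.inv p.2 ≫ a.2⟩ * μ p.1 ⟨a.1, p.2⟩

/-- A family of probability measures on a discrete groupoid: each `μ^x` is a nonnegative
function on `𝒢^x` with total sum `1`. -/
def IsProbFamily {Ω : Type*} [Groupoid Ω] (μ : ∀ y : Ω, GpdFiber Ω y → ℝ) : Prop :=
  (∀ (y : Ω) (p : GpdFiber Ω y), 0 ≤ μ y p) ∧ ∀ y : Ω, HasSum (μ y) 1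

/-- The Markov operator `P_μ^x` on bounded functions on `𝒢^x`:
`(P_μ^x f)(g) = ∑_{h ∈ 𝒢^{s(g)}} f(gh) · μ^{s(g)}(h)`. -/
noncomputable def markovOp {Ω : Type*} [Groupoid Ω] {x : Ω}
    (μ : ∀ y : Ω, GpdFiber Ω y → ℝ) (f : GpdFiber Ω x → ℝ) : GpdFiber Ω x → ℝ :=
  fun g => ∑' h : Σ w : Ω, (w ⟶ g.1), f ⟨h.1, h.2 ≫ g.2⟩ * μ g.1 ⟨h.1, h.2⟩

/-- The point mass `δ_g` at an element `g ∈ 𝒢^x`. -/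
noncomputable def diracF {Ω : Type*} [Groupoid Ω] {x : Ω} (g : GpdFiber Ω x) :
    GpdFiber Ω x → ℝ :=
  fun a => letI := Classical.propDecidable (a = g); if a = g then 1 else 0

/-- The translate `g·f` of a function `f` on `𝒢^x` by `g` with `s(g) = x`, `r(g) = y`:
`(g·f)(a) = f(g⁻¹ a)`. -/
def translateF {Ω : Type*} [Groupoid Ω] {x y : Ω} (g : x ⟶ y) (f : GpdFiber Ω x → ℝ) :
    GpdFiber Ω y → ℝ :=
  fun a => f ⟨a.1, a.2 ≫ Groupoid.inv g⟩

/-- The `n`-fold convolution power `μ^{*n}` of a family of measures (with `μ^{*0}` the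
family of point masses at the units, so that `μ^{*1} = μ`, `μ^{*(n+1)} = μ^{*n} * μ`). -/
noncomputable def convPow {Ω : Type*} [Groupoid Ω] (μ : ∀ y : Ω, GpdFiber Ω y → ℝ) :
    ℕ → ∀ y : Ω, GpdFiber Ω y → ℝ
  | 0 => fun y => diracF (⟨y, 𝟙 y⟩ : GpdFiber Ω y)
  | n + 1 => fun x => convF (convPow μ n x) μ

/-!
Write `δ_g μ^k` for the translate of `μ^{*k,s(g)}` by `g ∈ 𝒢^x`. It is the law at time `k` of the
Markov chain started at `g`, so `(P^k f)(g) = ∑ f · δ_g μ^k`: the step `k → k + 1` is the duality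
`∑ v · (f * μ) = ∑ P v · f`, a change of variables on composable pairs. A bounded harmonic sequence
satisfies `u_n = P^k u_{n+k}`, hence
`|u_n(g) - u_n(x)| ≤ (sup ‖u_m‖) · ‖g·μ^{*k,s(g)} - μ^{*k,x}‖₁` for every `k`, and the right-hand
side tends to zero. Thus each `u_n` is constant, and `P` fixes constants.
-/

section

variable {Ω : Type*} [Groupoid Ω] {μ : ∀ y : Ω, GpdFiber Ω y → ℝ} {x : Ω}

lemma summable_mul_of_abs_le {ι : Type*} {f v : ι → ℝ} {M : ℝ} (hf : Summable f)
    (hv : ∀ i, |v i| ≤ M) : Summable fun i => v i * f i :=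
  (hf.abs.mul_left M).of_norm_bounded fun i => by
    simpa only [Real.norm_eq_abs, abs_mul] using
      mul_le_mul_of_nonneg_right (hv i) (abs_nonneg (f i))

lemma abs_tsum_mul_le_of_abs_le {ι : Type*} {f v : ι → ℝ} {M : ℝ} (hf : Summable f)
    (hv : ∀ i, |v i| ≤ M) : |∑' i, v i * f i| ≤ M * ∑' i, |f i| := by
  rw [← tsum_mul_left, ← Real.norm_eq_abs]
  refine tsum_of_norm_bounded (hf.abs.mul_left M).hasSum fun i => ?_
  simpa only [Real.norm_eq_abs, abs_mul] using
    mul_le_mul_of_nonneg_right (hv i) (abs_nonneg (f i))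

lemma iterate_apply_of_backward_orbit {α : Type*} {P : α → α} {u : ℕ → α}
    (hu : ∀ n, P (u (n + 1)) = u n) (k : ℕ) : P^[k] (u k) = u 0 := by
  induction k with
  | zero => rfl
  | succ k ih => rw [Function.iterate_succ_apply, hu, ih]

/-- The change of variables `(b, h) ↦ (bh, h)` from composable pairs (`s(b) = r(h)`) to pairs
with a common source, where each pair is indexed by its first component. -/
def composablePairEquiv (x : Ω) :
    (Σ b : GpdFiber Ω x, GpdFiber Ω b.1) ≃ Σ a : GpdFiber Ω x, Σ w : Ω, (a.1 ⟶ w) where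
  toFun q := ⟨⟨q.2.1, q.2.2 ≫ q.1.2⟩, ⟨q.1.1, q.2.2⟩⟩
  invFun q := ⟨⟨q.2.1, Groupoid.inv q.2.2 ≫ q.1.2⟩, ⟨q.1.1, q.2.2⟩⟩
  left_inv := by
    rintro ⟨⟨b, g⟩, ⟨c, h⟩⟩
    simp
  right_inv := by
    rintro ⟨⟨a, g⟩, ⟨w, h⟩⟩
    simp

lemma translateF_id (f : GpdFiber Ω x → ℝ) : translateF (𝟙 x) f = f := by
  funext a
  simp [translateF]

lemma translateF_diracF {y : Ω} (g : y ⟶ x) (p : GpdFiber Ω y) :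
    translateF g (diracF p) = diracF ⟨p.1, p.2 ≫ g⟩ := by
  funext a
  have h_iff : (⟨a.1, a.2 ≫ Groupoid.inv g⟩ : GpdFiber Ω y) = p ↔ a = ⟨p.1, p.2 ≫ g⟩ := by
    constructor <;> rintro rfl <;> simp
  simp only [translateF, diracF]
  congr 1
  exact propext h_iff

lemma translateF_convF {y : Ω} (g : y ⟶ x) (f : GpdFiber Ω y → ℝ)
    (μ : ∀ y : Ω, GpdFiber Ω y → ℝ) :
    translateF g (convF f μ) = convF (translateF g f) μ := by
  funext a
  simp [translateF, convF]

lemma hasSum_mul_diracF (f : GpdFiber Ω x → ℝ) (g : GpdFiber Ω x) :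
    HasSum (fun a => f a * diracF g a) (f g) := by
  have h := hasSum_single (f := fun a => f a * diracF g a) g
    fun a ha => by simp [diracF, ha]
  simpa [diracF] using h

namespace IsProbFamily

lemma markovOp_const (hμ : IsProbFamily μ) (c : ℝ) :
    markovOp μ (fun _ : GpdFiber Ω x => c) = fun _ => c := by
  funext g
  exact ((hμ.2 g.1).mul_left c).tsum_eq.trans (mul_one c)

lemma abs_markovOp_le (hμ : IsProbFamily μ) {f : GpdFiber Ω x → ℝ} {M : ℝ}
    (hf : ∀ a, |f a| ≤ M) (g : GpdFiber Ω x) : |markovOp μ f g| ≤ M :=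
  calc |markovOp μ f g| ≤ M * ∑' h, |μ g.1 h| :=
        abs_tsum_mul_le_of_abs_le (hμ.2 g.1).summable fun h => hf _
    _ = M := by simp only [abs_of_nonneg (hμ.1 g.1 _), (hμ.2 g.1).tsum_eq, mul_one]

lemma summable_mul_sigma (hμ : IsProbFamily μ) {f : GpdFiber Ω x → ℝ} (hf : Summable f) :
    Summable fun q : Σ b : GpdFiber Ω x, GpdFiber Ω b.1 => f q.1 * μ q.1.1 q.2 := by
  have h_abs : ∀ b : GpdFiber Ω x, HasSum (fun h => |f b| * μ b.1 h) |f b| := fun b => by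
    simpa using (hμ.2 b.1).mul_left |f b|
  refine Summable.of_abs ?_
  simp only [abs_mul, abs_of_nonneg (hμ.1 _ _)]
  refine (summable_sigma_of_nonneg fun q => mul_nonneg (abs_nonneg _) (hμ.1 _ _)).2
    ⟨fun b => (h_abs b).summable, ?_⟩
  simpa only [(h_abs _).tsum_eq] using hf.abs

lemma hasSum_mul_convF (hμ : IsProbFamily μ) {f v : GpdFiber Ω x → ℝ} {M : ℝ}
    (hf : Summable f) (hv : ∀ a, |v a| ≤ M) :
    HasSum (fun a => v a * convF f μ a) (∑' b, markovOp μ v b * f b) := by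
  let F : (Σ a : GpdFiber Ω x, Σ w : Ω, (a.1 ⟶ w)) → ℝ := fun q =>
    v q.1 * (f ⟨q.2.1, Groupoid.inv q.2.2 ≫ q.1.2⟩ * μ q.2.1 ⟨q.1.1, q.2.2⟩)
  let G : (Σ b : GpdFiber Ω x, GpdFiber Ω b.1) → ℝ := fun q =>
    v ⟨q.2.1, q.2.2 ≫ q.1.2⟩ * (f q.1 * μ q.1.1 q.2)
  have hFG : F ∘ composablePairEquiv x = G := by
    funext q
    simp [F, G, composablePairEquiv]
  have hG_summable : Summable G :=
    summable_mul_of_abs_le (hμ.summable_mul_sigma hf) fun q => hv _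
  have hG_fiber : ∀ b, ∑' h, G ⟨b, h⟩ = markovOp μ v b * f b := fun b => by
    rw [markovOp, ← tsum_mul_right]
    exact tsum_congr fun h => by ring
  have hF : HasSum F (∑' b, markovOp μ v b * f b) := by
    rw [← (composablePairEquiv x).hasSum_iff, hFG]
    simpa only [hG_summable.tsum_sigma, hG_fiber] using hG_summable.hasSum
  have hF_fiber : ∀ a, ∑' p, F ⟨a, p⟩ = v a * convF f μ a := fun a => by
    simp only [F, tsum_mul_left, convF]
  simpa only [hF_fiber] using hF.sigma fun a => (hF.summable.sigma_factor a).hasSum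

lemma summable_convF (hμ : IsProbFamily μ) {f : GpdFiber Ω x → ℝ} (hf : Summable f) :
    Summable (convF f μ) := by
  simpa using (hμ.hasSum_mul_convF (v := fun _ => 1) (M := 1) hf (by simp)).summable

lemma summable_translateF_convPow (hμ : IsProbFamily μ) (g : GpdFiber Ω x) (k : ℕ) :
    Summable (translateF g.2 (convPow μ k g.1)) := by
  induction k with
  | zero => simpa [convPow, translateF_diracF] using (hasSum_mul_diracF 1 g).summable
  | succ k ih => simpa only [convPow, translateF_convF] using hμ.summable_convF ih

lemma hasSum_iterate_markovOp (hμ : IsProbFamily μ) {f : GpdFiber Ω x → ℝ} {M : ℝ}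
    (hf : ∀ a, |f a| ≤ M) (g : GpdFiber Ω x) (k : ℕ) :
    HasSum (fun a => f a * translateF g.2 (convPow μ k g.1) a) ((markovOp μ)^[k] f g) := by
  induction k generalizing f with
  | zero => simpa [convPow, translateF_diracF] using hasSum_mul_diracF f g
  | succ k ih =>
    rw [Function.iterate_succ_apply, ← (ih (hμ.abs_markovOp_le hf)).tsum_eq]
    simpa only [convPow, translateF_convF] using
      hμ.hasSum_mul_convF (hμ.summable_translateF_convPow g k) hf

lemma abs_iterate_markovOp_sub_le (hμ : IsProbFamily μ) {f : GpdFiber Ω x → ℝ} {M : ℝ}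
    (hf : ∀ a, |f a| ≤ M) (g h : GpdFiber Ω x) (k : ℕ) :
    |(markovOp μ)^[k] f g - (markovOp μ)^[k] f h| ≤
      M * ∑' a, |translateF g.2 (convPow μ k g.1) a - translateF h.2 (convPow μ k h.1) a| := by
  have h_diff := (hμ.hasSum_iterate_markovOp hf g k).sub (hμ.hasSum_iterate_markovOp hf h k)
  have h_summable :=
    (hμ.summable_translateF_convPow g k).sub (hμ.summable_translateF_convPow h k)
  simp only [← mul_sub] at h_diff
  rw [← h_diff.tsum_eq]
  exact abs_tsum_mul_le_of_abs_le h_summable hf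

end IsProbFamily

/-- The Reiter condition at `x`: `‖g·μ^{*n,s(g)} - μ^{*n,x}‖₁ → 0` for every `g ∈ 𝒢^x`. -/
def ReiterCondition (μ : ∀ y : Ω, GpdFiber Ω y → ℝ) (x : Ω) : Prop :=
  ∀ g : GpdFiber Ω x, Filter.Tendsto
    (fun n => ∑' a, |translateF g.2 (convPow μ n g.1) a - convPow μ n x a|)
    Filter.atTop (nhds 0)

lemma ReiterCondition.exists_eq_const_of_harmonic (hReiter : ReiterCondition μ x)
    (hμ : IsProbFamily μ) {u : ℕ → GpdFiber Ω x → ℝ}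
    (hu : ∀ n, markovOp μ (u (n + 1)) = u n) {M : ℝ} (hM : ∀ n a, |u n a| ≤ M) :
    ∃ c, u 0 = fun _ => c := by
  refine ⟨u 0 ⟨x, 𝟙 x⟩, funext fun g => ?_⟩
  have h_bound : ∀ k, |u 0 g - u 0 ⟨x, 𝟙 x⟩| ≤
      M * ∑' a, |translateF g.2 (convPow μ k g.1) a - convPow μ k x a| := fun k => by
    simpa only [iterate_apply_of_backward_orbit hu, translateF_id] using
      hμ.abs_iterate_markovOp_sub_le (hM k) g ⟨x, 𝟙 x⟩ k
  have h_lim := (hReiter g).const_mul M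
  rw [mul_zero] at h_lim
  exact sub_eq_zero.1 (abs_nonpos_iff.1 (ge_of_tendsto' h_lim h_bound))

theorem tail_boundary_trivial_general (hμ : IsProbFamily μ) (hReiter : ReiterCondition μ x)
    {u : ℕ → GpdFiber Ω x → ℝ} (hu : ∀ n, 1 ≤ n → markovOp μ (u (n + 1)) = u n)
    (hM : ∃ M, ∀ n, 1 ≤ n → ∀ a, |u n a| ≤ M) {n : ℕ} (hn : 1 ≤ n) :
    (∀ a b, u n a = u n b) ∧ u n = u (n + 1) := by
  obtain ⟨M, hM⟩ := hM
  have h_const : ∀ m, 1 ≤ m → ∃ c, u m = fun _ => c := fun m hm =>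
    hReiter.exists_eq_const_of_harmonic hμ (u := fun k => u (m + k))
      (fun k => hu (m + k) (by omega)) (fun k => hM (m + k) (by omega))
  obtain ⟨c, hc⟩ := h_const n hn
  obtain ⟨d, hd⟩ := h_const (n + 1) (by omega)
  exact ⟨fun a b => by rw [hc], by rw [← hu n hn, hd, hμ.markovOp_const]⟩

end

/-- if `μ` satisfies the Reiter condition at `x`, then the tail boundary of
`P_μ^x` is trivial: every bounded harmonic sequence consists of constant functions and is
eventually constant in `n`. -/
theorem tail_boundary_trivial {Ω : Type*} [Groupoid Ω]
    [∀ x : Ω, Countable (GpdFiber Ω x)]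
    (μ : ∀ y : Ω, GpdFiber Ω y → ℝ) (hμ : IsProbFamily μ) (x : Ω)
    (hReiter : ∀ g : GpdFiber Ω x,
      Filter.Tendsto
        (fun n => ∑' a, |translateF g.2 (convPow μ n g.1) a - convPow μ n x a|)
        Filter.atTop (nhds 0)) :
    ∀ u : ℕ → GpdFiber Ω x → ℝ,
      (∀ n, 1 ≤ n → markovOp μ (u (n + 1)) = u n) →
      (∃ M, ∀ n, 1 ≤ n → ∀ a, |u n a| ≤ M) →
      ∀ n, 1 ≤ n → (∀ a b, u n a = u n b) ∧ u n = u (n + 1) := by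
  intro u hu hM n hn
  exact tail_boundary_trivial_general hμ hReiter hu hM hn
end

section
/- Let c be a normalized 𝕋-valued 3-cocycle on the discrete groupoid 𝒢. For every composable pair (g,h) in 𝒢, every n ≥ 1, and every k ∈ 𝒢 with r(k)=r(g): u_g^n(k) ∘ u_h^n(g⁻¹k) = c(g,h,h⁻¹g⁻¹k) · (w^n(g,h)(k) ∘ u_{gh}^n(k)), as linear maps from complex-valued functions on 𝒢^{s(h),(n)}_{s(k)} to complex-valued functions on 𝒢^{r(g),(n)}_{s(k)}. -/
/-!
Both sides translate tuples by `g h` up to a scalar, so it suffices to compare the scalars at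
`g h 𝒕`. With `p = t₁` and `l = p⁻¹ h⁻¹ g⁻¹ k`, the left-hand side contributes
`c(g, h p, l) c(h, p, l)` and the right-hand side `c(g, h, p l) conj(c(g, h, p)) c(g h, p, l)`;
these agree by the cocycle identity for `(g, h, p, l)`.
-/

open CategoryTheory ComplexConjugate

universe u

/-- `Tup Ω n x y` is the set `𝒢^{x,(n+1)}_y` of composable `(n+1)`-tuples
`(t₁, …, t_{n+1})` with `r(t₁) = x`, `s(t_i) = r(t_{i+1})` and `s(t_{n+1}) = y`
(morphism composition convention: the groupoid product `g h` is `h ≫ g`). -/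
def Tup (Ω : Type u) [Groupoid.{u} Ω] : ℕ → Ω → Ω → Type u
  | 0, x, y => y ⟶ x
  | n + 1, x, y => Σ w : Ω, (w ⟶ x) × Tup Ω n w y

/-- The first entry `t₁` of a composable tuple, as an element of `𝒢^x`. -/
def Tup.head {Ω : Type u} [Groupoid.{u} Ω] : ∀ {n : ℕ} {x y : Ω}, Tup Ω n x y → Σ w : Ω, w ⟶ x
  | 0, _, y, t => ⟨y, t⟩
  | _ + 1, _, _, t => ⟨t.1, t.2.1⟩

/-- The action `g𝒕 = (g t₁, t₂, …)` of `g` with `s(g) = r(t₁)` on composable tuples. -/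
def Tup.act {Ω : Type u} [Groupoid.{u} Ω] :
    ∀ {n : ℕ} {x x' y : Ω}, (x ⟶ x') → Tup Ω n x y → Tup Ω n x' y
  | 0, _, _, _, g, t => t ≫ g
  | _ + 1, _, _, _, g, t => ⟨t.1, t.2.1 ≫ g, t.2.2⟩

/-- The range of the last entry of a composable tuple. -/
def Tup.last {Ω : Type u} [Groupoid.{u} Ω] : ∀ {n : ℕ} {x y : Ω}, Tup Ω n x y → Ω
  | 0, x, _, _ => x
  | _ + 1, _, _, t => Tup.last t.2.2

/-- The last entry of a composable tuple. -/
def Tup.lastHom {Ω : Type u} [Groupoid.{u} Ω] : ∀ {n : ℕ} {x y : Ω} (t : Tup Ω n x y), y ⟶ t.last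
  | 0, _, _, t => t
  | _ + 1, _, _, t => Tup.lastHom t.2.2

/-- A normalized `𝕋`-valued 3-cocycle on the discrete groupoid `Ω`:  `c g h k` is defined for
composable triples (`s(g) = r(h)`, `s(h) = r(k)`), has modulus one, satisfies the 3-cocycle
identity, and is `1` whenever one of the arguments is a unit. -/
structure GpdCocycle (Ω : Type u) [Groupoid.{u} Ω] where
  c : ∀ {a b cc d : Ω}, (cc ⟶ d) → (b ⟶ cc) → (a ⟶ b) → ℂ
  abs_one : ∀ {a b cc d : Ω} (g : cc ⟶ d) (h : b ⟶ cc) (k : a ⟶ b), ‖c g h k‖ = 1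
  identity : ∀ {a b cc d e : Ω} (g : d ⟶ e) (h : cc ⟶ d) (k : b ⟶ cc) (l : a ⟶ b),
    c g h k * conj (c g h (l ≫ k)) * c g (k ≫ h) l * conj (c (h ≫ g) k l) * c h k l = 1
  norm₁ : ∀ {a b cc : Ω} (h : b ⟶ cc) (k : a ⟶ b), c (𝟙 cc) h k = 1
  norm₂ : ∀ {a b : Ω} {cc : Ω} (g : b ⟶ cc) (k : a ⟶ b), c g (𝟙 b) k = 1
  norm₃ : ∀ {a b cc : Ω} (g : b ⟶ cc) (h : a ⟶ b), c g h (𝟙 a) = 1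

/-- The unitary `u_g^n(k)` (for `r(k') = r(g)`): it sends a function `ξ` on
`𝒢^{s(g),(n)}_z` to the function on `𝒢^{r(g),(n)}_z` with `(u_g^n(k)ξ)(g𝒕) =
c(g, t₁, t₁⁻¹g⁻¹k)·ξ(𝒕)`.  (The auxiliary element `k` may have any source.) -/
def uMap {Ω : Type u} [Groupoid.{u} Ω] (C : GpdCocycle Ω) {n : ℕ} {c d z z' : Ω}
    (g : c ⟶ d) (k : z' ⟶ d) (ξ : Tup Ω n c z → ℂ) : Tup Ω n d z → ℂ :=
  fun s =>
    C.c g (Tup.head (Tup.act (Groupoid.inv g) s)).2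
        (k ≫ Groupoid.inv g ≫ Groupoid.inv (Tup.head (Tup.act (Groupoid.inv g) s)).2) *
      ξ (Tup.act (Groupoid.inv g) s)

/-- The inverse of `u_g^n(k)`:  `((u_g^n(k))⁻¹ξ)(𝒕) = conj(c(g,t₁,t₁⁻¹g⁻¹k))·ξ(g𝒕)`. -/
def uMapInv {Ω : Type u} [Groupoid.{u} Ω] (C : GpdCocycle Ω) {n : ℕ} {c d z z' : Ω}
    (g : c ⟶ d) (k : z' ⟶ d) (ξ : Tup Ω n d z → ℂ) : Tup Ω n c z → ℂ :=
  fun t =>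
    conj (C.c g (Tup.head t).2 (k ≫ Groupoid.inv g ≫ Groupoid.inv (Tup.head t).2)) *
      ξ (Tup.act g t)

/-- The unitary `w^n(g,h)`: `(w^n(g,h)ξ)(𝒔) = conj(c(g,h,h⁻¹g⁻¹s₁))·ξ(𝒔)` on functions on
`𝒢^{r(g),(n)}_z`. -/
def wMap {Ω : Type u} [Groupoid.{u} Ω] (C : GpdCocycle Ω) {n : ℕ} {b c d z : Ω}
    (g : c ⟶ d) (h : b ⟶ c) (ξ : Tup Ω n d z → ℂ) : Tup Ω n d z → ℂ :=
  fun s => conj (C.c g h ((Tup.head s).2 ≫ Groupoid.inv g ≫ Groupoid.inv h)) * ξ s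

/-- The inverse of `w^n(g,h)`. -/
def wMapInv {Ω : Type u} [Groupoid.{u} Ω] (C : GpdCocycle Ω) {n : ℕ} {b c d z : Ω}
    (g : c ⟶ d) (h : b ⟶ c) (ξ : Tup Ω n d z → ℂ) : Tup Ω n d z → ℂ :=
  fun s => C.c g h ((Tup.head s).2 ≫ Groupoid.inv g ≫ Groupoid.inv h) * ξ s

section

variable {Ω : Type u} [Groupoid.{u} Ω]

namespace Tup

variable {n : ℕ} {x x' x'' y : Ω}

lemma head_act (g : x ⟶ x') (t : Tup Ω n x y) : (t.act g).head = ⟨t.head.1, t.head.2 ≫ g⟩ := by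
  cases n <;> rfl

lemma act_id (t : Tup Ω n x y) : t.act (𝟙 x) = t := by
  cases n with
  | zero => exact Category.comp_id (X := y) t
  | succ n => exact congrArg (fun f => (⟨t.1, f, t.2.2⟩ : Tup Ω (n + 1) x y)) (Category.comp_id _)

lemma act_act (h : x ⟶ x') (g : x' ⟶ x'') (t : Tup Ω n x y) :
    (t.act h).act g = t.act (h ≫ g) := by
  cases n with
  | zero => exact Category.assoc (W := y) t h g
  | succ n =>
    exact congrArg (fun f => (⟨t.1, f, t.2.2⟩ : Tup Ω (n + 1) x'' y)) (Category.assoc _ _ _)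

lemma act_inv_act (g : x ⟶ x') (t : Tup Ω n x y) : (t.act g).act (Groupoid.inv g) = t := by
  rw [act_act, Groupoid.comp_inv, act_id]

lemma act_surjective (g : x ⟶ x') : Function.Surjective (act g : Tup Ω n x y → Tup Ω n x' y) :=
  fun t => ⟨t.act (Groupoid.inv g), by rw [act_act, Groupoid.inv_comp, act_id]⟩

end Tup

namespace GpdCocycle

variable (C : GpdCocycle Ω) {v w x y z : Ω}

lemma c_ne_zero (g : y ⟶ z) (h : x ⟶ y) (k : w ⟶ x) : C.c g h k ≠ 0 :=
  norm_ne_zero_iff.mp (by rw [C.abs_one]; exact one_ne_zero)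

lemma conj_c (g : y ⟶ z) (h : x ⟶ y) (k : w ⟶ x) : conj (C.c g h k) = (C.c g h k)⁻¹ :=
  (Complex.inv_eq_conj (C.abs_one g h k)).symm

lemma c_comp_mul_c (g : y ⟶ z) (h : x ⟶ y) (p : w ⟶ x) (l : v ⟶ w) :
    C.c g (p ≫ h) l * C.c h p l =
      C.c g h (l ≫ p) * (conj (C.c g h p) * C.c (h ≫ g) p l) := by
  have cocycle := C.identity g h p l
  simp only [conj_c] at cocycle ⊢
  field_simp [C.c_ne_zero] at cocycle ⊢
  linear_combination cocycle

end GpdCocycle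

variable (C : GpdCocycle Ω) {n : ℕ} {a b c d y : Ω}

lemma uMap_act (g : c ⟶ d) (k : a ⟶ d) (ξ : Tup Ω n c y → ℂ) (t : Tup Ω n c y) :
    uMap C g k ξ (t.act g) =
      C.c g t.head.2 (k ≫ Groupoid.inv g ≫ Groupoid.inv t.head.2) * ξ t := by
  rw [uMap, Tup.act_inv_act]

lemma wMap_act (g : c ⟶ d) (h : b ⟶ c) (η : Tup Ω n d y → ℂ) (t : Tup Ω n b y) :
    wMap C g h η (t.act (h ≫ g)) = conj (C.c g h t.head.2) * η (t.act (h ≫ g)) := by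
  rw [wMap, Tup.head_act]
  simp [Groupoid.inv_eq_inv]

theorem uMap_comp_general (g : c ⟶ d) (h : b ⟶ c) (k : a ⟶ d) (ξ : Tup Ω n b y → ℂ) :
    uMap C g k (uMap C h (k ≫ Groupoid.inv g) ξ) =
      C.c g h (k ≫ Groupoid.inv g ≫ Groupoid.inv h) • wMap C g h (uMap C (h ≫ g) k ξ) := by
  funext s
  obtain ⟨t, rfl⟩ := Tup.act_surjective (h ≫ g) s
  set p := t.head.2 with p_def
  set l := k ≫ Groupoid.inv g ≫ Groupoid.inv h ≫ Groupoid.inv p with l_def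
  have left : uMap C g k (uMap C h (k ≫ Groupoid.inv g) ξ) (t.act (h ≫ g)) =
      C.c g (p ≫ h) l * (C.c h p l * ξ t) := by
    rw [← Tup.act_act, uMap_act, uMap_act, Tup.head_act]
    simp [p_def, l_def, Groupoid.inv_eq_inv]
  have right : wMap C g h (uMap C (h ≫ g) k ξ) (t.act (h ≫ g)) =
      conj (C.c g h p) * (C.c (h ≫ g) p l * ξ t) := by
    rw [wMap_act, uMap_act]
    simp [p_def, l_def, Groupoid.inv_eq_inv]
  have l_comp_p : l ≫ p = k ≫ Groupoid.inv g ≫ Groupoid.inv h := by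
    simp [l_def, Groupoid.inv_eq_inv]
  rw [Pi.smul_apply, smul_eq_mul, left, right, ← l_comp_p]
  linear_combination ξ t * C.c_comp_mul_c g h p l

end

/-- `u_g^n(k) ∘ u_h^n(g⁻¹k) = c(g,h,h⁻¹g⁻¹k) · (w^n(g,h)(k) ∘ u_{gh}^n(k))`
for every composable pair `(g,h)`, every `n ≥ 1` (here tuples of length `n = m + 1`), and
every `k` with `r(k) = r(g)`. -/
theorem uMap_comp {Ω : Type u} [Groupoid.{u} Ω] (C : GpdCocycle Ω)
    {b cc d z : Ω} (g : cc ⟶ d) (h : b ⟶ cc) (k : z ⟶ d) (m : ℕ)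
    (ξ : Tup Ω m b z → ℂ) (t : Tup Ω m d z) :
    uMap C g k (uMap C h (k ≫ Groupoid.inv g) ξ) t =
      C.c g h (k ≫ Groupoid.inv g ≫ Groupoid.inv h) *
        wMap C g h (uMap C (h ≫ g) k ξ) t :=
  congrFun (uMap_comp_general C g h k ξ) t
end

section
/- Let (α,w,c) be an outer action of the discrete groupoid 𝒢 on a family {M(x)} of unital C*-algebras. For every γ ∈ 𝒢 with y = r(γ) and all loops g,h at y (i.e. s(g)=r(g)=s(h)=r(h)=y): V(g,γ)·α_g(V(h,γ))·w(g,h)·V(gh,γ)* = ζ_γ(g,h)·α_γ(w(γ⁻¹gγ, γ⁻¹hγ)), where V(n,γ) = w(γ,γ⁻¹nγ)·w(n,γ)* and ζ_γ(g,h) = conj(c(g,h,γ))·c(g,γ,γ⁻¹hγ)·conj(c(γ,γ⁻¹gγ,γ⁻¹hγ)). -/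
open CategoryTheory ComplexConjugate

/-- An outer action `(α, w, c)` of a discrete groupoid on a family `M` of unital
C*-algebras indexed by the units: unital *-isomorphisms `α_g : M(s(g)) → M(r(g))`,
unitaries `w(g,h) ∈ M(r(g))` for composable pairs, and a modulus-one scalar `c(g,h,k)` for
composable triples, with `α_g ∘ α_h = Ad(w(g,h)) ∘ α_{gh}`,
`α_g(w(h,k))·w(g,hk) = c(g,h,k)·w(g,h)·w(gh,k)` and `w(g,h) = 1` when `g` or `h` is a unit.
(The groupoid product `g h` corresponds to the composite `h ≫ g` of morphisms.) -/
structure OuterAction (Ω : Type*) [Groupoid Ω] (M : Ω → Type*)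
    [∀ x, NormedRing (M x)] [∀ x, StarRing (M x)] [∀ x, CStarRing (M x)]
    [∀ x, NormedAlgebra ℂ (M x)] [∀ x, StarModule ℂ (M x)] where
  α : ∀ {a b : Ω}, (a ⟶ b) → (M a ≃⋆ₐ[ℂ] M b)
  w : ∀ {a b cc : Ω}, (b ⟶ cc) → (a ⟶ b) → M cc
  c : ∀ {a b cc d : Ω}, (cc ⟶ d) → (b ⟶ cc) → (a ⟶ b) → ℂ
  w_unitary : ∀ {a b cc : Ω} (g : b ⟶ cc) (h : a ⟶ b), w g h ∈ unitary (M cc)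
  c_abs : ∀ {a b cc d : Ω} (g : cc ⟶ d) (h : b ⟶ cc) (k : a ⟶ b), ‖c g h k‖ = 1
  α_comp : ∀ {a b cc : Ω} (g : b ⟶ cc) (h : a ⟶ b) (m : M a),
    α g (α h m) = w g h * α (h ≫ g) m * star (w g h)
  w_cocycle : ∀ {a b cc d : Ω} (g : cc ⟶ d) (h : b ⟶ cc) (k : a ⟶ b),
    α g (w h k) * w g (k ≫ h) = c g h k • (w g h * w (h ≫ g) k)
  w_unit_left : ∀ {a b : Ω} (h : a ⟶ b), w (𝟙 b) h = 1
  w_unit_right : ∀ {a b : Ω} (g : a ⟶ b), w g (𝟙 a) = 1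

/-- The unitary `V(n,g) = w(g, g⁻¹ng) · w(n,g)*` for a loop `n` at `r(g)`. -/
def OuterAction.V {Ω : Type*} [Groupoid Ω] {M : Ω → Type*}
    [∀ x, NormedRing (M x)] [∀ x, StarRing (M x)] [∀ x, CStarRing (M x)]
    [∀ x, NormedAlgebra ℂ (M x)] [∀ x, StarModule ℂ (M x)]
    (A : OuterAction Ω M) {a b : Ω} (n : b ⟶ b) (g : a ⟶ b) : M b :=
  A.w g (g ≫ n ≫ Groupoid.inv g) * star (A.w n g)

/-!
Glue two commuting squares `γ₁ q = h γ₀` and `γ₂ p = g γ₁` (in groupoid notation). The cocycle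
identity for `(g, h, γ₀)` removes `α_g(w(h,γ₀))*` from the left-hand side, the one for `(g, γ₁, q)`
removes `α_g(w(γ₁,q))`, and the one for `(γ₂, p, q)` creates `α_{γ₂}(w(p,q))`; each contributes one
of the three scalars. Conjugation by `γ` is the case `γ₀ = γ₁ = γ₂ = γ`.
-/

namespace OuterAction

variable {Ω : Type*} [Groupoid Ω] {M : Ω → Type*}
  [∀ x, NormedRing (M x)] [∀ x, StarRing (M x)] [∀ x, CStarRing (M x)]
  [∀ x, NormedAlgebra ℂ (M x)] [∀ x, StarModule ℂ (M x)] (A : OuterAction Ω M)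

/-- The unitary `w(δ,p) · w(g,γ)*` comparing the two factorizations of the diagonal of a commuting
square `p ≫ δ = γ ≫ g`. It generalizes `V(n,γ)`, which is the case `δ = γ`, `g = n`, `p = γ⁻¹nγ`.
Commutativity is not part of the data; the arguments are in the order of `CategoryTheory.CommSq`. -/
def squareUnitary {a b d e : Ω} (p : a ⟶ b) (γ : a ⟶ d) (δ : b ⟶ e) (g : d ⟶ e) : M e :=
  A.w δ p * star (A.w g γ)

theorem V_eq_squareUnitary {x y : Ω} (γ : x ⟶ y) (n : y ⟶ y) :
    A.V n γ = A.squareUnitary (γ ≫ n ≫ Groupoid.inv γ) γ γ n :=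
  rfl

theorem V_comp_eq_squareUnitary {x y : Ω} (γ : x ⟶ y) (g h : y ⟶ y) :
    A.V (h ≫ g) γ =
      A.squareUnitary ((γ ≫ h ≫ Groupoid.inv γ) ≫ γ ≫ g ≫ Groupoid.inv γ) γ γ (h ≫ g) := by
  simp [V_eq_squareUnitary]

section Cocycle

variable {a b d e : Ω} (g : d ⟶ e) (h : b ⟶ d) (k : a ⟶ b)

theorem star_w_mul_w : star (A.w h k) * A.w h k = 1 :=
  Unitary.star_mul_self_of_mem (A.w_unitary h k)

theorem w_mul_star_w : A.w h k * star (A.w h k) = 1 :=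
  Unitary.mul_star_self_of_mem (A.w_unitary h k)

theorem conj_c_mul_c : conj (A.c g h k) * A.c g h k = 1 := by
  simp [Complex.conj_mul', A.c_abs]

theorem w_mul_w :
    A.w g h * A.w (h ≫ g) k = conj (A.c g h k) • (A.α g (A.w h k) * A.w g (k ≫ h)) := by
  rw [A.w_cocycle, smul_smul, A.conj_c_mul_c, one_smul]

theorem w_mul_w_mul_star_w :
    A.w g h * A.w (h ≫ g) k * star (A.w g (k ≫ h)) = conj (A.c g h k) • A.α g (A.w h k) := by
  rw [A.w_mul_w, smul_mul_assoc, mul_assoc, A.w_mul_star_w, mul_one]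

theorem star_α_w_mul_w_mul_w :
    star (A.α g (A.w h k)) * (A.w g h * A.w (h ≫ g) k) = conj (A.c g h k) • A.w g (k ≫ h) := by
  rw [A.w_mul_w, mul_smul_comm, ← mul_assoc, ← map_star, ← map_mul, A.star_w_mul_w, map_one,
    one_mul]

theorem star_w_mul_α_w_mul_w :
    star (A.w g h) * (A.α g (A.w h k) * A.w g (k ≫ h)) = A.c g h k • A.w (h ≫ g) k := by
  rw [A.w_cocycle, mul_smul_comm, ← mul_assoc, A.star_w_mul_w, one_mul]

end Cocycle

end OuterAction

theorem commSq_conj {C : Type*} [Groupoid C] {x y : C} (γ : x ⟶ y) (n : y ⟶ y) :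
    CommSq (γ ≫ n ≫ Groupoid.inv γ) γ γ n :=
  ⟨by simp⟩

theorem outerAction_V_cocycle_general {Ω : Type*} [Groupoid Ω] {M : Ω → Type*}
    [∀ x, NormedRing (M x)] [∀ x, StarRing (M x)] [∀ x, CStarRing (M x)]
    [∀ x, NormedAlgebra ℂ (M x)] [∀ x, StarModule ℂ (M x)] (A : OuterAction Ω M)
    {x₀ x₁ x₂ y₀ y₁ y₂ : Ω} {γ₀ : x₀ ⟶ y₀} {γ₁ : x₁ ⟶ y₁} {γ₂ : x₂ ⟶ y₂}
    {q : x₀ ⟶ x₁} {p : x₁ ⟶ x₂} {h : y₀ ⟶ y₁} {g : y₁ ⟶ y₂}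
    (sqh : CommSq q γ₀ γ₁ h) (sqg : CommSq p γ₁ γ₂ g) :
    A.squareUnitary p γ₁ γ₂ g * A.α g (A.squareUnitary q γ₀ γ₁ h) * A.w g h *
        star (A.squareUnitary (q ≫ p) γ₀ γ₂ (h ≫ g)) =
      (conj (A.c g h γ₀) * A.c g γ₁ q * conj (A.c γ₂ p q)) • A.α γ₂ (A.w p q) := by
  calc
    _ = A.w γ₂ p * (star (A.w g γ₁) * (A.α g (A.w γ₁ q) *
          (star (A.α g (A.w h γ₀)) * (A.w g h * A.w (h ≫ g) γ₀)))) *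
            star (A.w γ₂ (q ≫ p)) := by
      simp only [OuterAction.squareUnitary, map_mul, map_star, star_mul, star_star, mul_assoc]
    _ = conj (A.c g h γ₀) • (A.w γ₂ p * (star (A.w g γ₁) * (A.α g (A.w γ₁ q) *
          A.w g (q ≫ γ₁))) * star (A.w γ₂ (q ≫ p))) := by
      rw [A.star_α_w_mul_w_mul_w, ← sqh.w]
      simp only [mul_smul_comm, smul_mul_assoc]
    _ = (conj (A.c g h γ₀) * A.c g γ₁ q) •
          (A.w γ₂ p * A.w (p ≫ γ₂) q * star (A.w γ₂ (q ≫ p))) := by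
      rw [A.star_w_mul_α_w_mul_w, ← sqg.w, mul_smul_comm, smul_mul_assoc, smul_smul]
    _ = _ := by rw [A.w_mul_w_mul_star_w, smul_smul]

/-- for `γ` with `y = r(γ)` and loops `g, h` at `y`:
`V(g,γ)·α_g(V(h,γ))·w(g,h)·V(gh,γ)* = ζ_γ(g,h)·α_γ(w(γ⁻¹gγ, γ⁻¹hγ))` with
`ζ_γ(g,h) = conj(c(g,h,γ))·c(g,γ,γ⁻¹hγ)·conj(c(γ,γ⁻¹gγ,γ⁻¹hγ))`. -/
theorem outerAction_V_cocycle {Ω : Type*} [Groupoid Ω] {M : Ω → Type*}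
    [∀ x, NormedRing (M x)] [∀ x, StarRing (M x)] [∀ x, CStarRing (M x)]
    [∀ x, NormedAlgebra ℂ (M x)] [∀ x, StarModule ℂ (M x)]
    (A : OuterAction Ω M) {x y : Ω} (γ : x ⟶ y) (g h : y ⟶ y) :
    A.V g γ * A.α g (A.V h γ) * A.w g h * star (A.V (h ≫ g) γ) =
      (conj (A.c g h γ) * A.c g γ (γ ≫ h ≫ Groupoid.inv γ) *
          conj (A.c γ (γ ≫ g ≫ Groupoid.inv γ) (γ ≫ h ≫ Groupoid.inv γ))) •
        A.α γ (A.w (γ ≫ g ≫ Groupoid.inv γ) (γ ≫ h ≫ Groupoid.inv γ)) := by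
  rw [A.V_comp_eq_squareUnitary, A.V_eq_squareUnitary, A.V_eq_squareUnitary]
  exact outerAction_V_cocycle_general A (commSq_conj γ h) (commSq_conj γ g)
end

section
/- In the setting of an outer action (α,w,c) of a discrete groupoid 𝒢 with a normal isotropy subgroupoid 𝒩 and characteristic data (ũ,λ,μ) as in the context, the relation (CC3) holds: for every unit x and all l,m,n ∈ 𝒩_x, μ(l,m)·μ(lm,n) = c(l,m,n)·μ(m,n)·μ(l,mn), as an equality of central unitaries in M(x). -/
open CategoryTheory ComplexConjugate

/-- `N` is a normal subgroupoid of the isotropy bundle of the groupoid: each `N x` is a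
subgroup of the group of loops at `x`, stable under conjugation by arbitrary elements.
(The loop product `m n` corresponds to the composite `n ≫ m`.) -/
structure IsNormalIsotropy {Ω : Type*} [Groupoid Ω] (N : ∀ x : Ω, Set (x ⟶ x)) : Prop where
  one_mem : ∀ x : Ω, 𝟙 x ∈ N x
  mul_mem : ∀ {x : Ω} {m n : x ⟶ x}, m ∈ N x → n ∈ N x → (n ≫ m) ∈ N x
  inv_mem : ∀ {x : Ω} {n : x ⟶ x}, n ∈ N x → Groupoid.inv n ∈ N x
  conj_mem : ∀ {a b : Ω} (g : a ⟶ b) {n : b ⟶ b}, n ∈ N b → (g ≫ n ≫ Groupoid.inv g) ∈ N a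

/-- Characteristic data `(ũ, λ, μ)` for an outer action `(α,w,c)` with respect to a normal
isotropy subgroupoid `N`: unitaries `ũ^x(n)` implementing `α_n` for `n ∈ N_x`, and central
unitaries `λ(n,g)`, `μ(m,n)` with `α_g(ũ^{s(g)}(g⁻¹ng)) = V(n,g)·λ(n,g)·ũ^{r(g)}(n)` and
`ũ^x(m)·ũ^x(n) = μ(m,n)·w(m,n)·ũ^x(mn)`. -/
structure CharData {Ω : Type*} [Groupoid Ω] {M : Ω → Type*}
    [∀ x, NormedRing (M x)] [∀ x, StarRing (M x)] [∀ x, CStarRing (M x)]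
    [∀ x, NormedAlgebra ℂ (M x)] [∀ x, StarModule ℂ (M x)]
    (A : OuterAction Ω M) (N : ∀ x : Ω, Set (x ⟶ x)) where
  u : ∀ {x : Ω}, (x ⟶ x) → M x
  lam : ∀ {a b : Ω}, (b ⟶ b) → (a ⟶ b) → M b
  mu : ∀ {x : Ω}, (x ⟶ x) → (x ⟶ x) → M x
  u_unitary : ∀ {x : Ω} (n : x ⟶ x), n ∈ N x → u n ∈ unitary (M x)
  u_ad : ∀ {x : Ω} (n : x ⟶ x), n ∈ N x → ∀ m : M x, A.α n m = u n * m * star (u n)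
  lam_unitary : ∀ {a b : Ω} (n : b ⟶ b) (g : a ⟶ b), n ∈ N b → lam n g ∈ unitary (M b)
  lam_central : ∀ {a b : Ω} (n : b ⟶ b) (g : a ⟶ b), n ∈ N b →
    ∀ m : M b, lam n g * m = m * lam n g
  mu_unitary : ∀ {x : Ω} (m n : x ⟶ x), m ∈ N x → n ∈ N x → mu m n ∈ unitary (M x)
  mu_central : ∀ {x : Ω} (m n : x ⟶ x), m ∈ N x → n ∈ N x →
    ∀ a : M x, mu m n * a = a * mu m n
  u_rel : ∀ {a b : Ω} (n : b ⟶ b) (g : a ⟶ b), n ∈ N b →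
    A.α g (u (g ≫ n ≫ Groupoid.inv g)) = A.V n g * lam n g * u n
  mul_rel : ∀ {x : Ω} (m n : x ⟶ x), m ∈ N x → n ∈ N x →
    u m * u n = mu m n * A.w m n * u (n ≫ m)

/-!
Expand the triple product `ũ(l)·ũ(m)·ũ(n)` under its two bracketings. On the left one collects
`μ(l,m)·μ(lm,n)` in front of `w(l,m)·w(lm,n)·ũ(lmn)`; on the right, moving `ũ(l)` past `w(m,n)`
turns the latter into `α_l(w(m,n))`, and one collects `μ(m,n)·μ(l,mn)` in front of
`α_l(w(m,n))·w(l,mn)·ũ(lmn)`. The cocycle relation for `w` identifies the two tails up to the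
scalar `c(l,m,n)`, and the common tail is a unitary, so it cancels.
-/

namespace CharData

variable {Ω : Type*} [Groupoid Ω] {M : Ω → Type*}
  [∀ x, NormedRing (M x)] [∀ x, StarRing (M x)] [∀ x, CStarRing (M x)]
  [∀ x, NormedAlgebra ℂ (M x)] [∀ x, StarModule ℂ (M x)]
  {A : OuterAction Ω M} {N : ∀ x : Ω, Set (x ⟶ x)} (D : CharData A N) {x : Ω}

theorem u_mul_eq_α_mul_u {n : x ⟶ x} (hn : n ∈ N x) (a : M x) :
    D.u n * a = A.α n a * D.u n := by
  rw [D.u_ad n hn, mul_assoc, Unitary.star_mul_self_of_mem (D.u_unitary n hn), mul_one]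

theorem commute_mu {m n : x ⟶ x} (hm : m ∈ N x) (hn : n ∈ N x) (a : M x) :
    Commute (D.mu m n) a :=
  D.mu_central m n hm hn a

theorem u_mul_u_mul_u_left {l m n : x ⟶ x} (hl : l ∈ N x) (hm : m ∈ N x) (hn : n ∈ N x)
    (hlm : m ≫ l ∈ N x) :
    D.u l * D.u m * D.u n =
      D.mu l m * D.mu (m ≫ l) n * (A.w l m * A.w (m ≫ l) n * D.u (n ≫ m ≫ l)) :=
  calc D.u l * D.u m * D.u n
      = D.mu l m * A.w l m * (D.u (m ≫ l) * D.u n) := by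
        rw [D.mul_rel l m hl hm, mul_assoc]
    _ = D.mu l m * A.w l m * (D.mu (m ≫ l) n * (A.w (m ≫ l) n * D.u (n ≫ m ≫ l))) := by
        rw [D.mul_rel (m ≫ l) n hlm hn, mul_assoc (D.mu (m ≫ l) n)]
    _ = D.mu l m * D.mu (m ≫ l) n * (A.w l m * A.w (m ≫ l) n * D.u (n ≫ m ≫ l)) := by
        rw [(D.commute_mu hlm hn (A.w l m)).symm.mul_mul_mul_comm, mul_assoc (A.w l m)]

theorem u_mul_u_mul_u_right {l m n : x ⟶ x} (hl : l ∈ N x) (hm : m ∈ N x) (hn : n ∈ N x)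
    (hmn : n ≫ m ∈ N x) :
    D.u l * (D.u m * D.u n) =
      D.mu m n * D.mu l (n ≫ m) *
        (A.α l (A.w m n) * A.w l (n ≫ m) * D.u ((n ≫ m) ≫ l)) :=
  calc D.u l * (D.u m * D.u n)
      = D.mu m n * (D.u l * A.w m n * D.u (n ≫ m)) := by
        rw [D.mul_rel m n hm hn, mul_assoc (D.mu m n), (D.commute_mu hm hn (D.u l)).symm.left_comm,
          mul_assoc (D.u l)]
    _ = D.mu m n * A.α l (A.w m n) * (D.u l * D.u (n ≫ m)) := by
        rw [D.u_mul_eq_α_mul_u hl, mul_assoc (A.α l (A.w m n)), mul_assoc (D.mu m n)]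
    _ = D.mu m n * A.α l (A.w m n) *
          (D.mu l (n ≫ m) * (A.w l (n ≫ m) * D.u ((n ≫ m) ≫ l))) := by
        rw [D.mul_rel l (n ≫ m) hl hmn, mul_assoc (D.mu l (n ≫ m))]
    _ = D.mu m n * D.mu l (n ≫ m) *
          (A.α l (A.w m n) * A.w l (n ≫ m) * D.u ((n ≫ m) ≫ l)) := by
        rw [(D.commute_mu hl hmn (A.α l (A.w m n))).symm.mul_mul_mul_comm,
          mul_assoc (A.α l (A.w m n))]

end CharData

theorem charData_CC3_general {Ω : Type*} [Groupoid Ω] {M : Ω → Type*}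
    [∀ x, NormedRing (M x)] [∀ x, StarRing (M x)] [∀ x, CStarRing (M x)]
    [∀ x, NormedAlgebra ℂ (M x)] [∀ x, StarModule ℂ (M x)]
    (A : OuterAction Ω M) (N : ∀ x : Ω, Set (x ⟶ x)) (D : CharData A N) {x : Ω}
    (hN : ∀ {m n : x ⟶ x}, m ∈ N x → n ∈ N x → n ≫ m ∈ N x)
    (l m n : x ⟶ x) (hl : l ∈ N x) (hm : m ∈ N x) (hn : n ∈ N x) :
    D.mu l m * D.mu (m ≫ l) n = A.c l m n • (D.mu m n * D.mu l (n ≫ m)) := by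
  have hlm : m ≫ l ∈ N x := hN hl hm
  have tail_mem : A.w l m * A.w (m ≫ l) n * D.u (n ≫ m ≫ l) ∈ unitary (M x) :=
    mul_mem (mul_mem (A.w_unitary _ _) (A.w_unitary _ _)) (D.u_unitary _ (hN hlm hn))
  refine (Unitary.mul_left_inj ⟨_, tail_mem⟩).mp ?_
  calc D.mu l m * D.mu (m ≫ l) n * (A.w l m * A.w (m ≫ l) n * D.u (n ≫ m ≫ l))
      = D.u l * (D.u m * D.u n) := by
        rw [← D.u_mul_u_mul_u_left hl hm hn hlm, mul_assoc]
    _ = D.mu m n * D.mu l (n ≫ m) *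
          (A.α l (A.w m n) * A.w l (n ≫ m) * D.u (n ≫ m ≫ l)) := by
        rw [D.u_mul_u_mul_u_right hl hm hn (hN hm hn), Category.assoc]
    _ = A.c l m n • (D.mu m n * D.mu l (n ≫ m)) *
          (A.w l m * A.w (m ≫ l) n * D.u (n ≫ m ≫ l)) := by
        rw [A.w_cocycle, smul_mul_assoc, mul_smul_comm, ← smul_mul_assoc]

/-- relation (CC3): `μ(l,m)·μ(lm,n) = c(l,m,n)·μ(m,n)·μ(l,mn)` for all
`l, m, n ∈ 𝒩_x`. -/
theorem charData_CC3 {Ω : Type*} [Groupoid Ω] {M : Ω → Type*}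
    [∀ x, NormedRing (M x)] [∀ x, StarRing (M x)] [∀ x, CStarRing (M x)]
    [∀ x, NormedAlgebra ℂ (M x)] [∀ x, StarModule ℂ (M x)]
    (A : OuterAction Ω M)
    (hc : ∀ {a b cc d e : Ω} (g : d ⟶ e) (h : cc ⟶ d) (k : b ⟶ cc) (l : a ⟶ b),
      A.c g h k * conj (A.c g h (l ≫ k)) * A.c g (k ≫ h) l * conj (A.c (h ≫ g) k l) *
        A.c h k l = 1)
    (N : ∀ x : Ω, Set (x ⟶ x)) (hN : IsNormalIsotropy N) (D : CharData A N)
    {x : Ω} (l m n : x ⟶ x) (hl : l ∈ N x) (hm : m ∈ N x) (hn : n ∈ N x) :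
    D.mu l m * D.mu (m ≫ l) n = A.c l m n • (D.mu m n * D.mu l (n ≫ m)) :=
  charData_CC3_general A N D hN.mul_mem l m n hl hm hn
end

section
/- In the setting of an outer action (α,w,c) of a discrete groupoid 𝒢 with a normal isotropy subgroupoid 𝒩 and characteristic data (ũ,λ,μ) as in the context, the relation (CC4) holds: for every composable pair (g,h) in 𝒢 and every n ∈ 𝒩_{r(g)}, λ(n,gh) = α_g(λ(g⁻¹ng,h))·λ(n,g)·conj(c(g,g⁻¹ng,h))·c(n,g,h)·c(g,h,h⁻¹g⁻¹ngh), as an equality of central unitaries in M(r(g)). -/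
open CategoryTheory ComplexConjugate

/-!
Compute `α_g(α_h(ũ(h⁻¹g⁻¹ngh)))` in two ways: by applying the defining relation of `λ` twice, and
by passing to `Ad(w(g,h)) ∘ α_{gh}` and applying that relation once. Apart from the central factors
`λ`, the two expressions differ only in the factors `α_g(V(g⁻¹ng,h))·V(n,g)` and
`w(g,h)·V(n,gh)·α_n(w(g,h))*`, and the three instances of the cocycle relation for `w` at
`(g,h,h⁻¹g⁻¹ngh)`, `(g,g⁻¹ng,h)` and `(n,g,h)` show that these agree up to the product of the
corresponding values of `c` (conjugated at the second triple).
-/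

lemma conj_comp_eq_conj_conj {Ω : Type*} [Groupoid Ω] {a b d : Ω}
    (h : a ⟶ b) (g : b ⟶ d) (n : d ⟶ d) :
    (h ≫ g) ≫ n ≫ Groupoid.inv (h ≫ g) =
      h ≫ (g ≫ n ≫ Groupoid.inv g) ≫ Groupoid.inv h := by
  simp [Groupoid.inv_eq_inv]

section

variable {Ω : Type*} [Groupoid Ω] {M : Ω → Type*}
  [∀ x, NormedRing (M x)] [∀ x, StarRing (M x)] [∀ x, CStarRing (M x)]
  [∀ x, NormedAlgebra ℂ (M x)] [∀ x, StarModule ℂ (M x)]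
  {a b d e : Ω}

namespace OuterAction

variable (A : OuterAction Ω M)

lemma V_mem_unitary (n : b ⟶ b) (g : a ⟶ b) : A.V n g ∈ unitary (M b) :=
  mul_mem (A.w_unitary _ _) (Unitary.star_mem (A.w_unitary _ _))

lemma c_mul_conj (g : d ⟶ e) (h : b ⟶ d) (k : a ⟶ b) : A.c g h k * conj (A.c g h k) = 1 := by
  simp [Complex.mul_conj', A.c_abs]

lemma map_w (g : d ⟶ e) (h : b ⟶ d) (k : a ⟶ b) :
    A.α g (A.w h k) = A.c g h k • (A.w g h * A.w (h ≫ g) k * star (A.w g (k ≫ h))) := by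
  rw [← smul_mul_assoc, ← A.w_cocycle, mul_assoc,
    Unitary.mul_star_self_of_mem (A.w_unitary _ _), mul_one]

lemma star_w_mul_star_w (g : d ⟶ e) (h : b ⟶ d) (k : a ⟶ b) :
    star (A.w (h ≫ g) k) * star (A.w g h) =
      A.c g h k • (star (A.w g (k ≫ h)) * star (A.α g (A.w h k))) := by
  rw [← star_mul, ← star_mul, A.w_cocycle, star_smul, ← starRingEnd_apply, smul_smul,
    A.c_mul_conj, one_smul]

lemma map_V_mul_V (h : a ⟶ b) (g : b ⟶ d) (n : d ⟶ d) :
    A.α g (A.V (g ≫ n ≫ Groupoid.inv g) h) * A.V n g =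
      (conj (A.c g (g ≫ n ≫ Groupoid.inv g) h) * A.c n g h *
          A.c g h ((h ≫ g) ≫ n ≫ Groupoid.inv (h ≫ g))) •
        (A.w g h * A.V n (h ≫ g) * star (A.α n (A.w g h))) := by
  simp only [V, conj_comp_eq_conj_conj]
  have hpg : (g ≫ n ≫ Groupoid.inv g) ≫ g = g ≫ n := by simp
  generalize g ≫ n ≫ Groupoid.inv g = p at hpg ⊢
  have hqh : (h ≫ p ≫ Groupoid.inv h) ≫ h = h ≫ p := by simp
  generalize h ≫ p ≫ Groupoid.inv h = q at hqh ⊢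
  have cancel_p : star (A.w g p) * A.w g p = 1 :=
    Unitary.star_mul_self_of_mem (A.w_unitary g p)
  have cancel_hp : star (A.w g (h ≫ p)) * A.w g (h ≫ p) = 1 :=
    Unitary.star_mul_self_of_mem (A.w_unitary g (h ≫ p))
  calc A.α g (A.w h q * star (A.w p h)) * (A.w g p * star (A.w n g))
    _ = (conj (A.c g p h) * A.c g h q) •
          (A.w g h * A.w (h ≫ g) q * (star (A.w g (h ≫ p)) * A.w g (h ≫ p)) *
            star (A.w (g ≫ n) h) * (star (A.w g p) * A.w g p) * star (A.w n g)) := by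
      rw [map_mul, map_star, A.map_w g h q, A.map_w g p h, hpg, hqh]
      simp only [star_smul, star_mul, star_star, starRingEnd_apply, smul_mul_assoc,
        mul_smul_comm, smul_smul, mul_assoc]
    _ = (conj (A.c g p h) * A.c g h q) •
          (A.w g h * A.w (h ≫ g) q * (star (A.w (g ≫ n) h) * star (A.w n g))) := by
      simp only [cancel_p, cancel_hp, mul_one, mul_assoc]
    _ = (conj (A.c g p h) * A.c n g h * A.c g h q) •
          (A.w g h * (A.w (h ≫ g) q * star (A.w n (h ≫ g))) * star (A.α n (A.w g h))) := by
      rw [A.star_w_mul_star_w n g h, mul_smul_comm, smul_smul, mul_right_comm]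
      simp only [mul_assoc]

end OuterAction

namespace CharData

variable {A : OuterAction Ω M} {N : ∀ x : Ω, Set (x ⟶ x)} (D : CharData A N)

lemma u_mul {n : b ⟶ b} (hn : n ∈ N b) (m : M b) : D.u n * m = A.α n m * D.u n := by
  rw [D.u_ad n hn, mul_assoc, Unitary.star_mul_self_of_mem (D.u_unitary n hn), mul_one]

lemma commute_lam {n : b ⟶ b} (hn : n ∈ N b) (g : a ⟶ b) (m : M b) : Commute (D.lam n g) m :=
  D.lam_central n g hn m

lemma commute_map_lam {n : b ⟶ b} (hn : n ∈ N b) (h : a ⟶ b) (g : b ⟶ d) (m : M d) :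
    Commute (A.α g (D.lam n h)) m := by
  obtain ⟨m, rfl⟩ := EquivLike.surjective (A.α g) m
  exact (D.commute_lam hn h m).map (A.α g)

lemma map_map_u_eq_map_lam_mul_lam_mul (h : a ⟶ b) (g : b ⟶ d) {n : d ⟶ d} (hn : n ∈ N d)
    (hp : g ≫ n ≫ Groupoid.inv g ∈ N b) :
    A.α g (A.α h (D.u ((h ≫ g) ≫ n ≫ Groupoid.inv (h ≫ g)))) =
      A.α g (D.lam (g ≫ n ≫ Groupoid.inv g) h) * D.lam n g *
        (A.α g (A.V (g ≫ n ≫ Groupoid.inv g) h) * A.V n g * D.u n) := by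
  rw [conj_comp_eq_conj_conj, D.u_rel _ h hp, map_mul, map_mul, D.u_rel n g hn,
    ← (D.commute_map_lam hp h g _).eq, ← (D.commute_lam hn g (A.V n g)).eq]
  simp only [mul_assoc]
  rw [(D.commute_lam hn g _).symm.left_comm]

lemma map_map_u_eq_lam_comp_mul (h : a ⟶ b) (g : b ⟶ d) {n : d ⟶ d} (hn : n ∈ N d) :
    A.α g (A.α h (D.u ((h ≫ g) ≫ n ≫ Groupoid.inv (h ≫ g)))) =
      D.lam n (h ≫ g) *
        (A.w g h * A.V n (h ≫ g) * star (A.α n (A.w g h)) * D.u n) := by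
  rw [A.α_comp, D.u_rel n (h ≫ g) hn, ← (D.commute_lam hn (h ≫ g) _).eq, ← map_star]
  simp only [mul_assoc]
  rw [D.u_mul hn, (D.commute_lam hn (h ≫ g) _).symm.left_comm]

end CharData

theorem charData_CC4_general (A : OuterAction Ω M) {N : ∀ x : Ω, Set (x ⟶ x)} (D : CharData A N)
    (h : a ⟶ b) (g : b ⟶ d) (n : d ⟶ d) (hn : n ∈ N d)
    (hp : g ≫ n ≫ Groupoid.inv g ∈ N b) :
    D.lam n (h ≫ g) =
      (conj (A.c g (g ≫ n ≫ Groupoid.inv g) h) * A.c n g h *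
          A.c g h ((h ≫ g) ≫ n ≫ Groupoid.inv (h ≫ g))) •
        (A.α g (D.lam (g ≫ n ≫ Groupoid.inv g) h) * D.lam n g) := by
  have common_mem_unitary :
      A.w g h * A.V n (h ≫ g) * star (A.α n (A.w g h)) * D.u n ∈ unitary (M d) :=
    mul_mem (mul_mem (mul_mem (A.w_unitary _ _) (A.V_mem_unitary _ _))
      (Unitary.star_mem (Unitary.map_mem (A.α n) (A.w_unitary _ _)))) (D.u_unitary n hn)
  apply (Unitary.isUnit_coe (U := ⟨_, common_mem_unitary⟩)).mul_right_cancel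
  rw [← D.map_map_u_eq_lam_comp_mul h g hn, D.map_map_u_eq_map_lam_mul_lam_mul h g hn hp,
    A.map_V_mul_V]
  simp only [smul_mul_assoc, mul_smul_comm]

end

/-- relation (CC4): for a composable pair `(g,h)` and `n ∈ 𝒩_{r(g)}`:
`λ(n,gh) = α_g(λ(g⁻¹ng,h))·λ(n,g)·conj(c(g,g⁻¹ng,h))·c(n,g,h)·c(g,h,h⁻¹g⁻¹ngh)`. -/
theorem charData_CC4 {Ω : Type*} [Groupoid Ω] {M : Ω → Type*}
    [∀ x, NormedRing (M x)] [∀ x, StarRing (M x)] [∀ x, CStarRing (M x)]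
    [∀ x, NormedAlgebra ℂ (M x)] [∀ x, StarModule ℂ (M x)]
    (A : OuterAction Ω M)
    (hc : ∀ {a b cc d e : Ω} (g : d ⟶ e) (h : cc ⟶ d) (k : b ⟶ cc) (l : a ⟶ b),
      A.c g h k * conj (A.c g h (l ≫ k)) * A.c g (k ≫ h) l * conj (A.c (h ≫ g) k l) *
        A.c h k l = 1)
    (N : ∀ x : Ω, Set (x ⟶ x)) (hN : IsNormalIsotropy N) (D : CharData A N)
    {a b cc : Ω} (h : a ⟶ b) (g : b ⟶ cc) (n : cc ⟶ cc) (hn : n ∈ N cc) :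
    D.lam n (h ≫ g) =
      (conj (A.c g (g ≫ n ≫ Groupoid.inv g) h) * A.c n g h *
          A.c g h ((h ≫ g) ≫ n ≫ Groupoid.inv (h ≫ g))) •
        (A.α g (D.lam (g ≫ n ≫ Groupoid.inv g) h) * D.lam n g) :=
  charData_CC4_general A D h g n hn (hN.conj_mem g hn)
end

section
/- In the setting of an outer action (α,w,c) of a discrete groupoid 𝒢 with a normal isotropy subgroupoid 𝒩 and characteristic data (ũ,λ,μ) as in the context, the relation (CC6) holds: for every unit x and all m,n ∈ 𝒩_x, λ(n,m) = μ(m,m⁻¹nm)·μ(n,m)*, as an equality of central unitaries in M(x). -/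
open CategoryTheory ComplexConjugate

/-!
Let `k = m⁻¹nm`, so that `mk = nm`. Since `α_m = Ad(ũ(m))`, the element `α_m(ũ(k))·ũ(m)` is
`ũ(m)·ũ(k) = μ(m,k)·w(m,k)·ũ(nm)`. Expanding `α_m(ũ(k))` through `λ` first and moving the central
factors to the left, it is also `λ(n,m)·μ(n,m)·w(m,k)·ũ(nm)`. The common factor `w(m,k)·ũ(nm)` is
unitary, hence cancels.
-/

section

variable {Ω : Type*} [Groupoid Ω] {M : Ω → Type*}
  [∀ x, NormedRing (M x)] [∀ x, StarRing (M x)] [∀ x, CStarRing (M x)]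
  [∀ x, NormedAlgebra ℂ (M x)] [∀ x, StarModule ℂ (M x)]
  {A : OuterAction Ω M} {N : ∀ x : Ω, Set (x ⟶ x)}

theorem OuterAction.V_mul_w (A : OuterAction Ω M) {a b : Ω} (n : b ⟶ b) (g : a ⟶ b) :
    A.V n g * A.w n g = A.w g (g ≫ n ≫ Groupoid.inv g) := by
  rw [OuterAction.V, mul_assoc, Unitary.star_mul_self_of_mem (A.w_unitary n g), mul_one]

namespace CharData

variable (D : CharData A N) {x : Ω} {m n : x ⟶ x}

theorem α_mul_u (hn : n ∈ N x) (a : M x) : A.α n a * D.u n = D.u n * a := by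
  rw [D.u_ad n hn, mul_assoc, Unitary.star_mul_self_of_mem (D.u_unitary n hn), mul_one]

theorem w_mul_u_mem_unitary (hm : m ∈ N x) (hn : n ∈ N x) :
    A.w m n * D.u (n ≫ m) ∈ unitary (M x) := by
  have hμ := D.mu_unitary m n hm hn
  have h_eq : A.w m n * D.u (n ≫ m) = star (D.mu m n) * (D.u m * D.u n) := by
    rw [D.mul_rel m n hm hn, mul_assoc, ← mul_assoc (star _),
      Unitary.star_mul_self_of_mem hμ, one_mul]
  rw [h_eq]
  exact mul_mem (Unitary.star_mem hμ) (mul_mem (D.u_unitary m hm) (D.u_unitary n hn))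

theorem α_u_conj_mul_u (hm : m ∈ N x) (hn : n ∈ N x) :
    A.α m (D.u (m ≫ n ≫ Groupoid.inv m)) * D.u m =
      D.lam n m * D.mu n m * (A.w m (m ≫ n ≫ Groupoid.inv m) * D.u (m ≫ n)) :=
  calc A.α m (D.u (m ≫ n ≫ Groupoid.inv m)) * D.u m
    _ = A.V n m * D.lam n m * (D.u n * D.u m) := by rw [D.u_rel n m hn, mul_assoc]
    _ = D.lam n m * (A.V n m * D.mu n m) * (A.w n m * D.u (m ≫ n)) := by
      rw [D.mul_rel n m hn hm, ← D.lam_central n m hn]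
      simp only [mul_assoc]
    _ = D.lam n m * D.mu n m * (A.V n m * A.w n m * D.u (m ≫ n)) := by
      rw [← D.mu_central n m hn hm]
      simp only [mul_assoc]
    _ = D.lam n m * D.mu n m * (A.w m (m ≫ n ≫ Groupoid.inv m) * D.u (m ≫ n)) := by
      rw [A.V_mul_w]

theorem u_mul_u_conj (hm : m ∈ N x) (hk : m ≫ n ≫ Groupoid.inv m ∈ N x) :
    D.u m * D.u (m ≫ n ≫ Groupoid.inv m) =
      D.mu m (m ≫ n ≫ Groupoid.inv m) *
        (A.w m (m ≫ n ≫ Groupoid.inv m) * D.u (m ≫ n)) := by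
  simpa [mul_assoc] using D.mul_rel m _ hm hk

end CharData

theorem charData_CC6_general (D : CharData A N) {x : Ω} {m n : x ⟶ x} (hm : m ∈ N x)
    (hn : n ∈ N x) (hk : m ≫ n ≫ Groupoid.inv m ∈ N x) :
    D.lam n m = D.mu m (m ≫ n ≫ Groupoid.inv m) * star (D.mu n m) := by
  have h_unitary : A.w m (m ≫ n ≫ Groupoid.inv m) * D.u (m ≫ n) ∈ unitary (M x) := by
    simpa using D.w_mul_u_mem_unitary hm hk
  have h_lam_mu : D.lam n m * D.mu n m = D.mu m (m ≫ n ≫ Groupoid.inv m) := by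
    apply (Unitary.isUnit_coe (U := ⟨_, h_unitary⟩)).mul_right_cancel
    rw [← D.α_u_conj_mul_u hm hn, D.α_mul_u hm, D.u_mul_u_conj hm hk]
  rw [← h_lam_mu, mul_assoc, Unitary.mul_star_self_of_mem (D.mu_unitary n m hn hm), mul_one]

end

/-- relation (CC6): `λ(n,m) = μ(m,m⁻¹nm)·μ(n,m)*` for all `m, n ∈ 𝒩_x`. -/
theorem charData_CC6 {Ω : Type*} [Groupoid Ω] {M : Ω → Type*}
    [∀ x, NormedRing (M x)] [∀ x, StarRing (M x)] [∀ x, CStarRing (M x)]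
    [∀ x, NormedAlgebra ℂ (M x)] [∀ x, StarModule ℂ (M x)]
    (A : OuterAction Ω M)
    (N : ∀ x : Ω, Set (x ⟶ x)) (hN : IsNormalIsotropy N) (D : CharData A N)
    {x : Ω} (m n : x ⟶ x) (hm : m ∈ N x) (hn : n ∈ N x) :
    D.lam n m = D.mu m (m ≫ n ≫ Groupoid.inv m) * star (D.mu n m) :=
  charData_CC6_general D hm hn (hN.conj_mem m hn)
end

section
/- In the group setting of the context (cocycle crossed action (α,w,c) of G on M, normal subgroup N with quotient Q = G/N, section p ↦ s_p, characteristic data (ũ,λ,μ), and the normalization formula for w), for all p,q,r ∈ Q: d₁(p,q,r) = c(s_p,s_q,s_r)·δ[λ,μ](p,q,r), where d₁(p,q,r) := α_{s_p}(z(q,r))·z(p,qr)·z(pq,r)*·z(p,q)*, z(p,q) := w(s_p,s_q)·ũ_{𝔫(p,q)}, and δ[λ,μ](p,q,r) := λ(s_p·𝔫(q,r)·s_p⁻¹, s_p)·μ(s_p·𝔫(q,r)·s_p⁻¹, 𝔫(p,qr))·μ(𝔫(p,q),𝔫(pq,r))*. -/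
open ComplexConjugate

/-- A cocycle crossed action `(α, w, c)` of a discrete group `G` on a unital C*-algebra `M`:
unital *-automorphisms `α_g`, unitaries `w(g,h)`, and modulus-one scalars `c(g,h,k)` with
`α_g ∘ α_h = Ad(w(g,h)) ∘ α_{gh}`, `α_g(w(h,k))·w(g,hk) = c(g,h,k)·w(g,h)·w(gh,k)`,
`w(g,h) = 1` when `g = e` or `h = e`, and `c(g,h,k) = 1` when one of `g,h,k` equals `e`. -/
structure CocycleCrossed (G : Type*) [Group G] (M : Type*) [NormedRing M] [StarRing M]
    [CStarRing M] [NormedAlgebra ℂ M] [StarModule ℂ M] where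
  α : G → (M ≃⋆ₐ[ℂ] M)
  w : G → G → M
  c : G → G → G → ℂ
  w_unitary : ∀ g h, w g h ∈ unitary M
  c_abs : ∀ g h k, ‖c g h k‖ = 1
  α_comp : ∀ g h (m : M), α g (α h m) = w g h * α (g * h) m * star (w g h)
  w_cocycle : ∀ g h k, α g (w h k) * w g (h * k) = c g h k • (w g h * w (g * h) k)
  w_one_left : ∀ h, w 1 h = 1
  w_one_right : ∀ g, w g 1 = 1
  c_one₁ : ∀ h k, c 1 h k = 1
  c_one₂ : ∀ g k, c g 1 k = 1
  c_one₃ : ∀ g h, c g h 1 = 1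

/-- Characteristic data `(ũ, λ, μ)` for a cocycle crossed action with respect to a normal
subgroup `N`: unitaries `ũ_n` implementing `α_n` for `n ∈ N` with `ũ_e = 1`, and central
unitaries `λ(n,g)`, `μ(m,n)` with `α_g(ũ_{g⁻¹ng}) = V(n,g)·λ(n,g)·ũ_n` and
`ũ_m·ũ_n = μ(m,n)·w(m,n)·ũ_{mn}`, where `V(n,g) = w(g,g⁻¹ng)·w(n,g)*`. -/
structure GroupCharData {G : Type*} [Group G] {M : Type*} [NormedRing M] [StarRing M]
    [CStarRing M] [NormedAlgebra ℂ M] [StarModule ℂ M]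
    (A : CocycleCrossed G M) (N : Subgroup G) where
  u : G → M
  lam : G → G → M
  mu : G → G → M
  u_one : u 1 = 1
  u_unitary : ∀ n ∈ N, u n ∈ unitary M
  u_ad : ∀ n ∈ N, ∀ m : M, A.α n m = u n * m * star (u n)
  lam_unitary : ∀ n ∈ N, ∀ g : G, lam n g ∈ unitary M
  lam_central : ∀ n ∈ N, ∀ (g : G) (m : M), lam n g * m = m * lam n g
  mu_unitary : ∀ m ∈ N, ∀ n ∈ N, mu m n ∈ unitary M
  mu_central : ∀ m ∈ N, ∀ n ∈ N, ∀ a : M, mu m n * a = a * mu m n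
  u_rel : ∀ n ∈ N, ∀ g : G,
    A.α g (u (g⁻¹ * n * g)) = (A.w g (g⁻¹ * n * g) * star (A.w n g)) * lam n g * u n
  mul_rel : ∀ m ∈ N, ∀ n ∈ N, u m * u n = mu m n * A.w m n * u (m * n)

variable {G : Type*} [Group G] {M : Type*} [NormedRing M] [StarRing M]
  [CStarRing M] [NormedAlgebra ℂ M] [StarModule ℂ M]

/-- `𝔫(p,q) = s_p·s_q·s_{pq}⁻¹` for a section `sec` of the quotient map `G → G/N`. -/
def nElt (N : Subgroup G) [N.Normal] (sec : G ⧸ N → G) (p q : G ⧸ N) : G :=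
  sec p * sec q * (sec (p * q))⁻¹

/-- `z(p,q) = w(s_p,s_q)·ũ_{𝔫(p,q)}`. -/
def zMap {N : Subgroup G} [N.Normal] (A : CocycleCrossed G M) (D : GroupCharData A N)
    (sec : G ⧸ N → G) (p q : G ⧸ N) : M :=
  A.w (sec p) (sec q) * D.u (nElt N sec p q)

/-- `d₁(p,q,r) = α_{s_p}(z(q,r))·z(p,qr)·z(pq,r)*·z(p,q)*`. -/
def dOne {N : Subgroup G} [N.Normal] (A : CocycleCrossed G M) (D : GroupCharData A N)
    (sec : G ⧸ N → G) (p q r : G ⧸ N) : M :=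
  A.α (sec p) (zMap A D sec q r) * zMap A D sec p (q * r) *
    star (zMap A D sec (p * q) r) * star (zMap A D sec p q)

/-- `δ[λ,μ](p,q,r) = λ(s_p·𝔫(q,r)·s_p⁻¹, s_p)·μ(s_p·𝔫(q,r)·s_p⁻¹, 𝔫(p,qr))·μ(𝔫(p,q),𝔫(pq,r))*`. -/
def deltaLM {N : Subgroup G} [N.Normal] (A : CocycleCrossed G M) (D : GroupCharData A N)
    (sec : G ⧸ N → G) (p q r : G ⧸ N) : M :=
  D.lam (sec p * nElt N sec q r * (sec p)⁻¹) (sec p) *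
    D.mu (sec p * nElt N sec q r * (sec p)⁻¹) (nElt N sec p (q * r)) *
    star (D.mu (nElt N sec p q) (nElt N sec (p * q) r))

/-!
Both `α_{s_p}(z(q,r))·z(p,qr)` and `z(p,q)·z(pq,r)` are multiples of the same unitary
`w(s_p,s_q)·w(s_p s_q,s_r)·ũ_{𝔫(p,q)𝔫(pq,r)}`. Pushing `ũ_n` through `z(p,q)` costs a factor `μ`
and turns `w(s_p,s_q)` into `w(n s_p,s_q)`, which gives the second product. In the first one,
`α_{s_p}(ũ_{𝔫(q,r)})` costs `λ`, pushing the resulting `ũ` through `z(p,qr)` costs `μ`, and the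
remaining cocycle identity for `w(s_p,s_q)·w(s_p s_q,s_r)` costs `c`.
-/

theorem CocycleCrossed.α_one_apply (A : CocycleCrossed G M) (x : M) : A.α 1 x = x := by
  have h := A.α_comp 1 1 x
  rw [A.w_one_left, mul_one, one_mul, star_one, mul_one] at h
  exact (A.α 1).injective h

section

variable {N : Subgroup G} [N.Normal] {sec : G ⧸ N → G}

theorem nElt_mem (hsec : ∀ p : G ⧸ N, QuotientGroup.mk (sec p) = p) (p q : G ⧸ N) :
    nElt N sec p q ∈ N := by
  rw [← QuotientGroup.eq_one_iff]
  simp [nElt, hsec]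

theorem nElt_mul_sec (p q : G ⧸ N) : nElt N sec p q * sec (p * q) = sec p * sec q := by
  simp [nElt]

theorem nElt_one_left (sec_one : sec 1 = 1) (q : G ⧸ N) : nElt N sec 1 q = 1 := by
  simp [nElt, sec_one]

theorem conj_nElt_mul_nElt (p q r : G ⧸ N) :
    sec p * nElt N sec q r * (sec p)⁻¹ * nElt N sec p (q * r) =
      nElt N sec p q * nElt N sec (p * q) r := by
  simp [nElt, mul_assoc]

end

/-- The cocycle `w` is normalized along the section `sec`: these relations are what the
normalization formula for `w` yields when one of its two factors from `N` is trivial. The last one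
is the formula for `m = 1` rewritten through `w_mul_sec`; it says that `c(s_p,n,s_q) = 1`. -/
structure IsNormalizedAlong (A : CocycleCrossed G M) {N : Subgroup G} [N.Normal]
    (sec : G ⧸ N → G) : Prop where
  w_mem_sec : ∀ n ∈ N, ∀ p, A.w n (sec p) = 1
  w_mul_sec : ∀ n ∈ N, ∀ p q,
    A.w (n * sec p) (sec q) = A.α n (A.w (sec p) (sec q)) * A.w n (nElt N sec p q)
  w_sec_mul_sec : ∀ n ∈ N, ∀ p q,
    A.w (sec p) (n * sec q) = A.w (sec p) n * A.w (sec p * n) (sec q)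

theorem IsNormalizedAlong.of_formula {A : CocycleCrossed G M} {N : Subgroup G} [N.Normal]
    {sec : G ⧸ N → G} (sec_one : sec 1 = 1)
    (hw : ∀ m ∈ N, ∀ n ∈ N, ∀ p q : G ⧸ N,
      A.w (m * sec p) (n * sec q) =
        A.α m (A.w (sec p) n) *
          A.α (m * (sec p * n * (sec p)⁻¹)) (A.w (sec p) (sec q)) *
          A.w m (sec p * n * (sec p)⁻¹) *
          A.w (m * (sec p * n * (sec p)⁻¹)) (nElt N sec p q)) :
    IsNormalizedAlong A sec := by
  have w_mul_sec : ∀ n ∈ N, ∀ p q,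
      A.w (n * sec p) (sec q) = A.α n (A.w (sec p) (sec q)) * A.w n (nElt N sec p q) := by
    intro n hn p q
    simpa only [one_mul, A.w_one_right, mul_one, map_one, mul_inv_cancel] using
      hw n hn 1 N.one_mem p q
  refine ⟨fun n hn q => ?_, w_mul_sec, fun n hn p q => ?_⟩
  · simpa only [sec_one, mul_one, nElt_one_left sec_one, A.w_one_left, A.w_one_right, map_one]
      using w_mul_sec n hn 1 q
  · have conj_mem : sec p * n * (sec p)⁻¹ ∈ N := Subgroup.Normal.conj_mem ‹_› n hn (sec p)
    calc A.w (sec p) (n * sec q)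
        = A.w (sec p) n * (A.α (sec p * n * (sec p)⁻¹) (A.w (sec p) (sec q)) *
            A.w (sec p * n * (sec p)⁻¹) (nElt N sec p q)) := by
          simpa only [one_mul, A.α_one_apply, A.w_one_left, mul_one, mul_assoc] using
            hw 1 N.one_mem n hn p q
      _ = A.w (sec p) n * A.w (sec p * n) (sec q) := by
          rw [← w_mul_sec _ conj_mem, inv_mul_cancel_right]

namespace GroupCharData

variable {A : CocycleCrossed G M} {N : Subgroup G} (D : GroupCharData A N)

theorem u_mul {n : G} (hn : n ∈ N) (x : M) : D.u n * x = A.α n x * D.u n := by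
  rw [D.u_ad n hn, mul_assoc, Unitary.star_mul_self_of_mem (D.u_unitary n hn), mul_one]

theorem u_mul_mul_u {m n : G} (hm : m ∈ N) (hn : n ∈ N) (x : M) :
    D.u m * (x * D.u n) = D.mu m n * (A.α m x * A.w m n * D.u (m * n)) := by
  have mu_comm : Commute (D.mu m n) (A.α m x) := D.mu_central m hm n hn _
  calc D.u m * (x * D.u n) = A.α m x * (D.u m * D.u n) := by
        rw [← mul_assoc, D.u_mul hm, mul_assoc]
    _ = D.mu m n * (A.α m x * A.w m n * D.u (m * n)) := by
        simp only [D.mul_rel m hm n hn, mul_assoc, mu_comm.left_comm]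

theorem α_u [N.Normal] {n : G} (hn : n ∈ N) (g : G) :
    A.α g (D.u n) = A.w g n * star (A.w (g * n * g⁻¹) g) * D.lam (g * n * g⁻¹) g *
      D.u (g * n * g⁻¹) := by
  have conj_conj : g⁻¹ * (g * n * g⁻¹) * g = n := by group
  simpa only [conj_conj] using D.u_rel _ (Subgroup.Normal.conj_mem ‹_› n hn g) g

variable [N.Normal] {sec : G ⧸ N → G}

theorem zMap_mem_unitary (hsec : ∀ p : G ⧸ N, QuotientGroup.mk (sec p) = p) (p q : G ⧸ N) :
    zMap A D sec p q ∈ unitary M :=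
  mul_mem (A.w_unitary _ _) (D.u_unitary _ (nElt_mem hsec p q))

theorem u_mul_zMap (hsec : ∀ p : G ⧸ N, QuotientGroup.mk (sec p) = p)
    (hA : IsNormalizedAlong A sec) {n : G} (hn : n ∈ N) (p q : G ⧸ N) :
    D.u n * zMap A D sec p q =
      D.mu n (nElt N sec p q) * (A.w (n * sec p) (sec q) * D.u (n * nElt N sec p q)) := by
  rw [zMap, D.u_mul_mul_u hn (nElt_mem hsec p q), hA.w_mul_sec n hn]

theorem zMap_mul_zMap (hsec : ∀ p : G ⧸ N, QuotientGroup.mk (sec p) = p)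
    (hA : IsNormalizedAlong A sec) (p q r : G ⧸ N) :
    zMap A D sec p q * zMap A D sec (p * q) r =
      D.mu (nElt N sec p q) (nElt N sec (p * q) r) *
        (A.w (sec p) (sec q) * A.w (sec p * sec q) (sec r) *
          D.u (nElt N sec p q * nElt N sec (p * q) r)) := by
  have hpq := nElt_mem hsec p q
  have mu_comm : Commute (D.mu (nElt N sec p q) (nElt N sec (p * q) r)) (A.w (sec p) (sec q)) :=
    D.mu_central _ hpq _ (nElt_mem hsec (p * q) r) _
  rw [zMap, mul_assoc, D.u_mul_zMap hsec hA hpq, nElt_mul_sec, ← mu_comm.left_comm, mul_assoc]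

theorem α_zMap (hsec : ∀ p : G ⧸ N, QuotientGroup.mk (sec p) = p)
    (hA : IsNormalizedAlong A sec) (p q r : G ⧸ N) :
    A.α (sec p) (zMap A D sec q r) =
      D.lam (sec p * nElt N sec q r * (sec p)⁻¹) (sec p) *
        (A.α (sec p) (A.w (sec q) (sec r)) * A.w (sec p) (nElt N sec q r) *
          D.u (sec p * nElt N sec q r * (sec p)⁻¹)) := by
  have conj_mem := Subgroup.Normal.conj_mem ‹_› _ (nElt_mem hsec q r) (sec p)
  have lam_comm (x : M) : Commute (D.lam (sec p * nElt N sec q r * (sec p)⁻¹) (sec p)) x :=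
    D.lam_central _ conj_mem _ x
  rw [zMap, map_mul, D.α_u (nElt_mem hsec q r), hA.w_mem_sec _ conj_mem, star_one, mul_one,
    ← (lam_comm _).eq, mul_assoc, (lam_comm _).symm.left_comm, ← mul_assoc (A.α _ _)]

theorem α_zMap_mul_zMap (hsec : ∀ p : G ⧸ N, QuotientGroup.mk (sec p) = p)
    (hA : IsNormalizedAlong A sec) (p q r : G ⧸ N) :
    A.α (sec p) (zMap A D sec q r) * zMap A D sec p (q * r) =
      A.c (sec p) (sec q) (sec r) •
        (D.lam (sec p * nElt N sec q r * (sec p)⁻¹) (sec p) *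
          D.mu (sec p * nElt N sec q r * (sec p)⁻¹) (nElt N sec p (q * r)) *
          (A.w (sec p) (sec q) * A.w (sec p * sec q) (sec r) *
            D.u (nElt N sec p q * nElt N sec (p * q) r))) := by
  have hqr := nElt_mem hsec q r
  have conj_mem := Subgroup.Normal.conj_mem ‹_› _ hqr (sec p)
  have w_split : A.w (sec p) (nElt N sec q r) * A.w (sec p * nElt N sec q r) (sec (q * r)) =
      A.w (sec p) (sec q * sec r) := by
    rw [← hA.w_sec_mul_sec _ hqr, nElt_mul_sec]
  set l := D.lam (sec p * nElt N sec q r * (sec p)⁻¹) (sec p)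
  set k := D.mu (sec p * nElt N sec q r * (sec p)⁻¹) (nElt N sec p (q * r))
  set v := D.u (nElt N sec p q * nElt N sec (p * q) r)
  have k_comm (x : M) : Commute k x := D.mu_central _ conj_mem _ (nElt_mem hsec p (q * r)) x
  calc A.α (sec p) (zMap A D sec q r) * zMap A D sec p (q * r)
      = l * (A.α (sec p) (A.w (sec q) (sec r)) * A.w (sec p) (nElt N sec q r) *
          (k * (A.w (sec p * nElt N sec q r) (sec (q * r)) * v))) := by
        rw [D.α_zMap hsec hA, mul_assoc, mul_assoc _ (D.u _), D.u_mul_zMap hsec hA conj_mem,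
          inv_mul_cancel_right, conj_nElt_mul_nElt]
    _ = l * k * (A.α (sec p) (A.w (sec q) (sec r)) * (A.w (sec p) (nElt N sec q r) *
          A.w (sec p * nElt N sec q r) (sec (q * r))) * v) := by
        simp only [← (k_comm _).left_comm, mul_assoc]
    _ = A.c (sec p) (sec q) (sec r) •
          (l * k * (A.w (sec p) (sec q) * A.w (sec p * sec q) (sec r) * v)) := by
        rw [w_split, A.w_cocycle, smul_mul_assoc, mul_smul_comm]

theorem α_zMap_mul_zMap_eq_delta (hsec : ∀ p : G ⧸ N, QuotientGroup.mk (sec p) = p)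
    (hA : IsNormalizedAlong A sec) (p q r : G ⧸ N) :
    A.α (sec p) (zMap A D sec q r) * zMap A D sec p (q * r) =
      A.c (sec p) (sec q) (sec r) •
        (deltaLM A D sec p q r * (zMap A D sec p q * zMap A D sec (p * q) r)) := by
  have mu_unitary := D.mu_unitary _ (nElt_mem hsec p q) _ (nElt_mem hsec (p * q) r)
  rw [D.α_zMap_mul_zMap hsec hA, D.zMap_mul_zMap hsec hA, deltaLM, mul_assoc _ (star _),
    ← mul_assoc (star _), Unitary.star_mul_self_of_mem mu_unitary, one_mul]

end GroupCharData

theorem dOne_eq_c_mul_delta_general {N : Subgroup G} [N.Normal]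
    (A : CocycleCrossed G M) (D : GroupCharData A N) {sec : G ⧸ N → G}
    (hsec : ∀ p : G ⧸ N, QuotientGroup.mk (sec p) = p) (hA : IsNormalizedAlong A sec)
    (p q r : G ⧸ N) :
    dOne A D sec p q r = A.c (sec p) (sec q) (sec r) • deltaLM A D sec p q r := by
  have zMap_mul_unitary : zMap A D sec p q * zMap A D sec (p * q) r ∈ unitary M :=
    mul_mem (D.zMap_mem_unitary hsec p q) (D.zMap_mem_unitary hsec (p * q) r)
  rw [dOne, D.α_zMap_mul_zMap_eq_delta hsec hA, mul_assoc, ← star_mul, smul_mul_assoc,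
    mul_assoc (deltaLM A D sec p q r), Unitary.mul_star_self_of_mem zMap_mul_unitary, mul_one]

/-- `d₁(p,q,r) = c(s_p,s_q,s_r)·δ[λ,μ](p,q,r)` for all `p, q, r ∈ Q = G/N`,
given the normalization formula for `w`. -/
theorem dOne_eq_c_mul_delta (N : Subgroup G) [N.Normal]
    (A : CocycleCrossed G M) (D : GroupCharData A N)
    (sec : G ⧸ N → G) (hsec : ∀ p : G ⧸ N, QuotientGroup.mk (sec p) = p)
    (sec_one : sec 1 = 1)
    (hw : ∀ m ∈ N, ∀ n ∈ N, ∀ p q : G ⧸ N,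
      A.w (m * sec p) (n * sec q) =
        A.α m (A.w (sec p) n) *
          A.α (m * (sec p * n * (sec p)⁻¹)) (A.w (sec p) (sec q)) *
          A.w m (sec p * n * (sec p)⁻¹) *
          A.w (m * (sec p * n * (sec p)⁻¹)) (nElt N sec p q))
    (p q r : G ⧸ N) :
    dOne A D sec p q r = A.c (sec p) (sec q) (sec r) • deltaLM A D sec p q r :=
  dOne_eq_c_mul_delta_general A D hsec (.of_formula sec_one hw) p q r
end
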